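/- Let Ω = ⋃_{j=1}^n (a_j, b_j) ⊆ ℝ be a finite union of bounded open intervals of total length 1, let Λ be a spectrum of Ω, and let T > 0. Suppose λ₁, λ₂ ∈ Λ with λ₁ > λ₂ are such that Λ ∩ [λ₁, λ₁+T] − λ₁ = Λ ∩ [λ₂, λ₂+T] − λ₂, and that both Λ ∩ [λ₁, λ₁+T] and Λ ∩ [λ₂, λ₂+T] are generating sets, i.e., span φ(Λ ∩ [λ_i, λ_i+T]) = span φ(Λ) for i = 1, 2. Then λ₁ − λ₂ is a period of Λ: Λ + (λ₁ − λ₂) = Λ. -/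

import Mathlib

open MeasureTheory Set

/-- The exponential function `e_λ(x) = exp(2πiλx)`. -/
noncomputable def expF (lam : ℝ) : ℝ → ℂ :=
  fun x => Complex.exp (2 * (Real.pi : ℂ) * Complex.I * (lam : ℂ) * (x : ℂ))

/-- `Λ` is a spectrum of `Ω`. -/
def IsSpectrum (Ω Λ : Set ℝ) : Prop :=
  ∃ F : Λ → Lp ℂ 2 (volume.restrict Ω),
    (∀ l : Λ, ⇑(F l) =ᵐ[volume.restrict Ω] expF (l : ℝ)) ∧
    Orthonormal ℂ F ∧
    (Submodule.span ℂ (Set.range F)).topologicalClosure = ⊤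

/-- The map `φ : ℝ → ℂ^{2n}`. -/
noncomputable def phiMap (n : ℕ) (a b : Fin n → ℝ) (x : ℝ) : (Fin n → ℂ) × (Fin n → ℂ) :=
  (fun j => Complex.exp (-(2 * (Real.pi : ℂ) * Complex.I * (a j : ℂ) * (x : ℂ))),
   fun j => Complex.exp (-(2 * (Real.pi : ℂ) * Complex.I * (b j : ℂ) * (x : ℂ))))

/-!
Put `g t = t ∫_Ω e_t`. For `x ≠ l` the exponentials `e_x` and `e_l` are orthogonal in `L²(Ω)`
exactly when `g (x - l) = 0`, so `x ∈ Λ` if and only if `g (x - l) = 0` for all `l ∈ Λ`. Integrating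
the exponential over the intervals shows that, for fixed `x`, `g (x - l)` is a linear function of
`φ l`; hence it suffices to test those `l` in a generating subset of `Λ`. Since
`φ (x + d) = φ x * φ d`, translation by `d` preserves the dimension of the spans, so a translate of
a generating subset that stays inside `Λ` is again generating, and testing `x` against the one set
is the same as testing `x + d` against the other.
-/

lemma exists_biInter_Ioo_eq {ι α : Type*} [LinearOrder α] {u : Finset ι} (hu : u.Nonempty)
    (a b : ι → α) : ∃ i ∈ u, ∃ j ∈ u, ⋂ k ∈ u, Ioo (a k) (b k) = Ioo (a i) (b j) := by
  obtain ⟨i, hi, ha⟩ := u.exists_max_image a hu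
  obtain ⟨j, hj, hb⟩ := u.exists_min_image b hu
  refine ⟨i, hi, j, hj, Subset.antisymm (fun x hx => ?_) ?_⟩
  · rw [mem_iInter₂] at hx
    exact ⟨(hx i hi).1, (hx j hj).2⟩
  · exact subset_iInter₂ fun k hk => Ioo_subset_Ioo (ha k hk) (hb k hk)

lemma image_add_sub_subset_of_image_sub_subset {G : Type*} [AddCommGroup G] {A B : Set G} {x y : G}
    (h : (fun t => t - y) '' B ⊆ (fun t => t - x) '' A) : (fun t => t + (x - y)) '' B ⊆ A := by
  rintro _ ⟨t, ht, rfl⟩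
  obtain ⟨s, hs, hst : s - x = t - y⟩ := h ⟨t, ht, rfl⟩
  have hts : t + (x - y) = s := by rw [← sub_add_cancel s x, hst]; abel
  exact mem_of_eq_of_mem hts hs

section Exponential

lemma continuous_expF (x : ℝ) : Continuous (expF x) := by
  unfold expF; fun_prop

lemma norm_expF (x y : ℝ) : ‖expF x y‖ = 1 := by
  have h : 2 * (Real.pi : ℂ) * Complex.I * (x : ℂ) * (y : ℂ)
      = ((2 * Real.pi * x * y : ℝ) : ℂ) * Complex.I := by push_cast; ring
  rw [expF, h, Complex.norm_exp_ofReal_mul_I]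

lemma inner_expF (x l y : ℝ) : inner ℂ (expF l y) (expF x y) = expF (x - l) y := by
  simp only [RCLike.inner_apply, expF, ← Complex.exp_conj, ← Complex.exp_add, map_mul,
    Complex.conj_ofReal, Complex.conj_I, Complex.conj_ofNat]
  congr 1; push_cast; ring

lemma memLp_expF (x : ℝ) (p : ENNReal) (μ : Measure ℝ) [IsFiniteMeasure μ] :
    MemLp (expF x) p μ :=
  MemLp.of_bound (continuous_expF x).aestronglyMeasurable 1 (.of_forall fun y => (norm_expF x y).le)

lemma toLp_expF_ne_zero (x : ℝ) (p : ENNReal) (μ : Measure ℝ) [IsFiniteMeasure μ] [NeZero μ] :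
    (memLp_expF x p μ).toLp ≠ 0 := by
  intro h
  have hae : expF x =ᵐ[μ] 0 := (memLp_expF x p μ).coeFn_toLp.symm.trans (h ▸ Lp.coeFn_zero ℂ p μ)
  obtain ⟨y, hy⟩ := hae.exists
  simpa [hy] using norm_expF x y

lemma inner_eq_integral_expF {μ : Measure ℝ} {x l : ℝ} {f g : Lp ℂ 2 μ}
    (hf : f =ᵐ[μ] expF l) (hg : g =ᵐ[μ] expF x) :
    inner ℂ f g = ∫ y, expF (x - l) y ∂μ := by
  rw [L2.inner_def]
  refine integral_congr_ae ?_
  filter_upwards [hf, hg] with y hfy hgy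
  rw [hfy, hgy, inner_expF]

end Exponential

section ScaledFourier

/-- The function `t ↦ t ∫_S e_t`, which detects orthogonality of exponentials in `L²(S)`. Thanks to
the factor `t`, it vanishes at `x - l` exactly when `x = l` or `e_x ⊥ e_l`, and it is an exponential
polynomial when `S` is a finite union of intervals. -/
noncomputable def scaledFourier (S : Set ℝ) (t : ℝ) : ℂ := t * ∫ y in S, expF t y

lemma scaledFourier_eq_zero_iff {S : Set ℝ} {t : ℝ} :
    scaledFourier S t = 0 ↔ t = 0 ∨ ∫ y in S, expF t y = 0 := by
  rw [scaledFourier, mul_eq_zero, Complex.ofReal_eq_zero]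

lemma scaledFourier_Ioo {c d : ℝ} (hcd : c ≤ d) (t : ℝ) :
    scaledFourier (Ioo c d) t = (2 * Real.pi * Complex.I)⁻¹ * (expF t d - expF t c) := by
  rcases eq_or_ne t 0 with rfl | ht
  · simp [scaledFourier, expF]
  · have hpit : 2 * (Real.pi : ℂ) * Complex.I * t ≠ 0 := by simp [ht]
    simp only [scaledFourier, expF]
    rw [← integral_Ioc_eq_integral_Ioo, ← intervalIntegral.integral_of_le hcd,
      integral_exp_mul_complex hpit]
    have htc : (t : ℂ) ≠ 0 := Complex.ofReal_ne_zero.mpr ht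
    field_simp

lemma scaledFourier_biUnion {ι : Type*} {s : Finset ι} {S : ι → Set ℝ}
    (hmeas : ∀ j ∈ s, MeasurableSet (S j)) (hfin : ∀ j ∈ s, volume (S j) ≠ ⊤) (t : ℝ) :
    scaledFourier (⋃ j ∈ s, S j) t = ∑ u ∈ s.powerset with u.Nonempty,
      (-1) ^ (u.card + 1) * scaledFourier (⋂ j ∈ u, S j) t := by
  have hintegrable (j : ι) (hj : j ∈ s) : IntegrableOn (expF t) (S j) := by
    have := isFiniteMeasure_restrict.mpr (hfin j hj)
    exact memLp_one_iff_integrable.mp (memLp_expF t 1 _)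
  rw [scaledFourier, integral_biUnion_eq_sum_powerset hmeas hintegrable, Finset.mul_sum]
  refine Finset.sum_congr rfl fun u _ => ?_
  rw [scaledFourier, Complex.real_smul]
  push_cast
  ring

end ScaledFourier

section PhiMap

variable {n : ℕ} (a b : Fin n → ℝ)

lemma phiMap_add (x y : ℝ) : phiMap n a b (x + y) = phiMap n a b x * phiMap n a b y := by
  ext j <;> simp only [phiMap, Prod.mk_mul_mk, Pi.mul_apply, ← Complex.exp_add] <;>
    congr 1 <;> push_cast <;> ring

lemma expF_sub_eq_mul_phiMap_fst (x l : ℝ) (j : Fin n) :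
    expF (x - l) (a j) = expF x (a j) * (phiMap n a b l).1 j := by
  simp only [phiMap, expF, ← Complex.exp_add]
  congr 1; push_cast; ring

lemma expF_sub_eq_mul_phiMap_snd (x l : ℝ) (j : Fin n) :
    expF (x - l) (b j) = expF x (b j) * (phiMap n a b l).2 j := by
  simp only [phiMap, expF, ← Complex.exp_add]
  congr 1; push_cast; ring

lemma finrank_span_phiMap_image_add_le (W : Set ℝ) (d : ℝ) :
    Module.finrank ℂ (Submodule.span ℂ (phiMap n a b '' ((fun t => t + d) '' W))) ≤
      Module.finrank ℂ (Submodule.span ℂ (phiMap n a b '' W)) := by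
  have himage : phiMap n a b '' ((fun t => t + d) '' W)
      = LinearMap.mulRight ℂ (phiMap n a b d) '' (phiMap n a b '' W) := by
    simp only [image_image, phiMap_add, LinearMap.mulRight_apply]
  rw [himage, Submodule.span_image]
  exact Submodule.finrank_map_le _ _

variable {a b} in
lemma span_phiMap_image_add_eq {W Λ : Set ℝ} {d : ℝ}
    (hWd : (fun t => t + d) '' W ⊆ Λ)
    (hgen : Submodule.span ℂ (phiMap n a b '' W) = Submodule.span ℂ (phiMap n a b '' Λ)) :
    Submodule.span ℂ (phiMap n a b '' ((fun t => t + d) '' W))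
      = Submodule.span ℂ (phiMap n a b '' Λ) := by
  refine Submodule.eq_of_le_of_finrank_le (Submodule.span_mono (image_mono hWd)) ?_
  have htranslate := finrank_span_phiMap_image_add_le a b ((fun t => t + d) '' W) (-d)
  rwa [image_image (fun t => t + -d), funext fun t => add_neg_cancel_right t d, image_id',
    hgen] at htranslate

lemma exists_linearMap_scaledFourier_Ioo (x : ℝ) (i j : Fin n) :
    ∃ L : (Fin n → ℂ) × (Fin n → ℂ) →ₗ[ℂ] ℂ,
      ∀ l, scaledFourier (Ioo (a i) (b j)) (x - l) = L (phiMap n a b l) := by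
  rcases le_total (a i) (b j) with hij | hji
  · refine ⟨(2 * Real.pi * Complex.I : ℂ)⁻¹ •
      (expF x (b j) • (LinearMap.proj j ∘ₗ LinearMap.snd ℂ _ _) -
        expF x (a i) • (LinearMap.proj i ∘ₗ LinearMap.fst ℂ _ _)), fun l => ?_⟩
    rw [scaledFourier_Ioo hij, expF_sub_eq_mul_phiMap_fst a b,
      expF_sub_eq_mul_phiMap_snd a b]
    rfl
  · exact ⟨0, fun l => by simp [scaledFourier, Ioo_eq_empty_of_le hji]⟩

lemma exists_linearMap_scaledFourier_iUnion_Ioo (x : ℝ) :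
    ∃ L : (Fin n → ℂ) × (Fin n → ℂ) →ₗ[ℂ] ℂ,
      ∀ l, scaledFourier (⋃ j, Ioo (a j) (b j)) (x - l) = L (phiMap n a b l) := by
  have hinter : ∀ u : Finset (Fin n), u.Nonempty → ∃ L : (Fin n → ℂ) × (Fin n → ℂ) →ₗ[ℂ] ℂ,
      ∀ l, scaledFourier (⋂ j ∈ u, Ioo (a j) (b j)) (x - l) = L (phiMap n a b l) := by
    intro u hu
    obtain ⟨i, -, j, -, hij⟩ := exists_biInter_Ioo_eq hu a b
    rw [hij]
    exact exists_linearMap_scaledFourier_Ioo a b x i j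
  choose! L hL using hinter
  refine ⟨∑ u : Finset (Fin n) with u.Nonempty, (-1 : ℂ) ^ (u.card + 1) • L u, fun l => ?_⟩
  have hexpand := scaledFourier_biUnion (s := Finset.univ) (S := fun j => Ioo (a j) (b j))
    (fun j _ => measurableSet_Ioo) (fun j _ => measure_Ioo_lt_top.ne) (x - l)
  simp only [Finset.mem_univ, iUnion_true, Finset.powerset_univ] at hexpand
  rw [hexpand, LinearMap.sum_apply]
  refine Finset.sum_congr rfl fun u hu => ?_
  rw [hL u (Finset.mem_filter.mp hu).2, LinearMap.smul_apply, smul_eq_mul]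

variable {a b} in
lemma scaledFourier_eq_zero_of_span_eq {W Λ : Set ℝ} {x : ℝ}
    (hgen : Submodule.span ℂ (phiMap n a b '' W) = Submodule.span ℂ (phiMap n a b '' Λ))
    (hzero : ∀ l ∈ W, scaledFourier (⋃ j, Ioo (a j) (b j)) (x - l) = 0) :
    ∀ l ∈ Λ, scaledFourier (⋃ j, Ioo (a j) (b j)) (x - l) = 0 := by
  obtain ⟨L, hL⟩ := exists_linearMap_scaledFourier_iUnion_Ioo a b x
  have hker : Submodule.span ℂ (phiMap n a b '' Λ) ≤ LinearMap.ker L := by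
    rw [← hgen, Submodule.span_le]
    rintro _ ⟨l, hl, rfl⟩
    exact (hL l).symm.trans (hzero l hl)
  exact fun l hl => (hL l).trans (hker (Submodule.subset_span ⟨l, hl, rfl⟩))

end PhiMap

namespace IsSpectrum

variable {Ω Λ : Set ℝ}

lemma neZero_restrict (hΛ : IsSpectrum Ω Λ) (hne : Λ.Nonempty) :
    NeZero (volume.restrict Ω) := by
  obtain ⟨F, -, hon, -⟩ := hΛ
  obtain ⟨l, hl⟩ := hne
  refine ⟨fun h => hon.ne_zero ⟨l, hl⟩ (Lp.ext ?_)⟩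
  exact Filter.eventually_bot.filter_mono (ae_eq_bot.mpr h).le

lemma scaledFourier_sub_eq_zero (hΛ : IsSpectrum Ω Λ) {x l : ℝ} (hx : x ∈ Λ) (hl : l ∈ Λ) :
    scaledFourier Ω (x - l) = 0 := by
  obtain ⟨F, hF, hon, -⟩ := hΛ
  refine scaledFourier_eq_zero_iff.mpr (or_iff_not_imp_left.mpr fun hxl => ?_)
  have hlx : (⟨l, hl⟩ : Λ) ≠ ⟨x, hx⟩ := fun h => hxl (sub_eq_zero.mpr (congrArg Subtype.val h).symm)
  rw [← inner_eq_integral_expF (hF ⟨l, hl⟩) (hF ⟨x, hx⟩)]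
  exact hon.inner_eq_zero hlx

lemma mem_of_scaledFourier_sub_eq_zero (hΛ : IsSpectrum Ω Λ) (hne : Λ.Nonempty)
    [IsFiniteMeasure (volume.restrict Ω)] {x : ℝ}
    (hzero : ∀ l ∈ Λ, scaledFourier Ω (x - l) = 0) : x ∈ Λ := by
  have := hΛ.neZero_restrict hne
  obtain ⟨F, hF, -, hdense⟩ := hΛ
  by_contra hx
  have horth : ∀ l : Λ, inner ℂ (F l) (memLp_expF x 2 (volume.restrict Ω)).toLp = 0 := by
    intro l
    rw [inner_eq_integral_expF (hF l) (memLp_expF x 2 _).coeFn_toLp]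
    refine (scaledFourier_eq_zero_iff.mp (hzero l l.2)).resolve_left fun hxl => hx ?_
    exact sub_eq_zero.mp hxl ▸ l.2
  have hspan : Submodule.span ℂ (range F) ≤ (ℂ ∙ (memLp_expF x 2 (volume.restrict Ω)).toLp)ᗮ :=
    Submodule.span_le.mpr <| range_subset_iff.mpr fun l =>
      Submodule.mem_orthogonal_singleton_iff_inner_left.mpr (horth l)
  refine toLp_expF_ne_zero x 2 (volume.restrict Ω) ?_
  exact (Submodule.dense_iff_topologicalClosure_eq_top.mpr hdense).eq_zero_of_inner_right ℂ
    fun v hv => Submodule.mem_orthogonal_singleton_iff_inner_left.mp (hspan hv)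

lemma mem_iff_of_span_eq {n : ℕ} {a b : Fin n → ℝ} {W : Set ℝ} {x : ℝ}
    (hΛ : IsSpectrum (⋃ j, Ioo (a j) (b j)) Λ) (hne : Λ.Nonempty) (hW : W ⊆ Λ)
    (hgen : Submodule.span ℂ (phiMap n a b '' W) = Submodule.span ℂ (phiMap n a b '' Λ)) :
    x ∈ Λ ↔ ∀ l ∈ W, scaledFourier (⋃ j, Ioo (a j) (b j)) (x - l) = 0 := by
  have hfinite : IsFiniteMeasure (volume.restrict (⋃ j, Ioo (a j) (b j))) :=
    isFiniteMeasure_restrict.mpr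
      (Bornology.isBounded_iUnion.mpr fun j => Metric.isBounded_Ioo _ _).measure_lt_top.ne
  exact ⟨fun hx l hl => hΛ.scaledFourier_sub_eq_zero hx (hW hl),
    fun h => hΛ.mem_of_scaledFourier_sub_eq_zero hne (scaledFourier_eq_zero_of_span_eq hgen h)⟩

end IsSpectrum

theorem equal_generating_windows_give_period_general {n : ℕ} {a b : Fin n → ℝ} {Λ W : Set ℝ}
    {d : ℝ} (hΛ : IsSpectrum (⋃ j, Ioo (a j) (b j)) Λ) (hW : W ⊆ Λ)
    (hWd : (fun t => t + d) '' W ⊆ Λ)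
    (hgen : Submodule.span ℂ (phiMap n a b '' W) = Submodule.span ℂ (phiMap n a b '' Λ)) :
    (fun t => t + d) '' Λ = Λ := by
  rcases Λ.eq_empty_or_nonempty with rfl | hne
  · exact image_empty _
  have hshift (x : ℝ) : x + d ∈ Λ ↔ x ∈ Λ := by
    rw [hΛ.mem_iff_of_span_eq hne hWd (span_phiMap_image_add_eq hWd hgen),
      hΛ.mem_iff_of_span_eq hne hW hgen]
    simp only [forall_mem_image, add_sub_add_right_eq_sub]
  ext y
  rw [image_add_right, mem_preimage, ← hshift, neg_add_cancel_right]

/-- If two generating windows of the spectrum `Λ` have the same shape, then the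
distance between their left endpoints is a period of `Λ`. -/
theorem equal_generating_windows_give_period (n : ℕ) (a b : Fin n → ℝ) (Ω : Set ℝ)
    (hΩ : Ω = ⋃ j, Ioo (a j) (b j))
    (hvol : volume Ω = 1)
    (Λ : Set ℝ) (hΛ : IsSpectrum Ω Λ)
    (T : ℝ) (hT : 0 < T)
    (l₁ l₂ : ℝ) (hl₁ : l₁ ∈ Λ) (hl₂ : l₂ ∈ Λ) (hlt : l₂ < l₁)
    (hshape : (fun t => t - l₁) '' (Λ ∩ Icc l₁ (l₁ + T))
            = (fun t => t - l₂) '' (Λ ∩ Icc l₂ (l₂ + T)))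
    (hgen₁ : Submodule.span ℂ (phiMap n a b '' (Λ ∩ Icc l₁ (l₁ + T)))
           = Submodule.span ℂ (phiMap n a b '' Λ))
    (hgen₂ : Submodule.span ℂ (phiMap n a b '' (Λ ∩ Icc l₂ (l₂ + T)))
           = Submodule.span ℂ (phiMap n a b '' Λ)) :
    (fun t => t + (l₁ - l₂)) '' Λ = Λ := by
  subst hΩ
  exact equal_generating_windows_give_period_general hΛ inter_subset_left
    ((image_add_sub_subset_of_image_sub_subset hshape.ge).trans inter_subset_left) hgen₂
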